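/- For any left 𝕆-module M, the set of cyclic elements satisfies 𝒞(M) = (⋃_{p ∈ 𝕆} p·𝒜(M)) ∪ (⋃_{p ∈ 𝕆} p·𝒜⁻(M)); that is, m is cyclic if and only if m = pa for some p ∈ 𝕆 and some a ∈ 𝒜(M) ∪ 𝒜⁻(M). -/

import Mathlib

noncomputable section

open scoped Quaternion

/-- The octonions, realized as pairs of quaternions via the Cayley–Dickson construction. -/
def Octo : Type := ℍ[ℝ] × ℍ[ℝ]

namespace Octo

instance : AddCommGroup Octo := inferInstanceAs (AddCommGroup (ℍ[ℝ] × ℍ[ℝ]))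
instance : Module ℝ Octo := inferInstanceAs (Module ℝ (ℍ[ℝ] × ℍ[ℝ]))

/-- Build an octonion from a pair of quaternions. -/
def mk (a b : ℍ[ℝ]) : Octo := (a, b)

/-- First quaternion component. -/
def p1 (x : Octo) : ℍ[ℝ] := (show ℍ[ℝ] × ℍ[ℝ] from x).1

/-- Second quaternion component. -/
def p2 (x : Octo) : ℍ[ℝ] := (show ℍ[ℝ] × ℍ[ℝ] from x).2

/-- Cayley–Dickson multiplication: `(a,b)(c,d) = (ac − d̄b, da + bc̄)`. -/
instance : Mul Octo :=
  ⟨fun x y => mk (p1 x * p1 y - star (p2 y) * p2 x) (p2 y * p1 x + p2 x * star (p1 y))⟩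

instance : One Octo := ⟨mk 1 0⟩

/-- Octonion conjugation: for `x = (a,b)`, `x̄ = (ā, −b)`. -/
def conj (x : Octo) : Octo := mk (star (p1 x)) (-(p2 x))

/-- The octonion associator `[x,y,z] = (xy)z − x(yz)`. -/
def assoc (x y z : Octo) : Octo := x * y * z - x * (y * z)

/-- The octonion commutator `[x,y] = xy − yx`. -/
def comm (x y : Octo) : Octo := x * y - y * x

/-- The canonical embedding of the reals into the octonions. -/
def ofReal (r : ℝ) : Octo := r • (1 : Octo)

end Octo

section OMod

variable {M : Type*} [AddCommGroup M] [Module ℝ M]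
variable {N : Type*} [AddCommGroup N] [Module ℝ N]

/-- `IsOMod sm` says that the scalar multiplication `sm : 𝕆 × M → M` makes the real vector
space `M` a left 𝕆-module: `sm` is ℝ-bilinear, unital, and the left associator is
alternating in its two octonion arguments. -/
structure IsOMod (sm : Octo → M → M) : Prop where
  smul_add : ∀ (p : Octo) (m n : M), sm p (m + n) = sm p m + sm p n
  add_smul : ∀ (p q : Octo) (m : M), sm (p + q) m = sm p m + sm q m
  real_smul : ∀ (r : ℝ) (p : Octo) (m : M), sm (r • p) m = r • sm p m
  smul_real : ∀ (r : ℝ) (p : Octo) (m : M), sm p (r • m) = r • sm p m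
  one_smul : ∀ m : M, sm 1 m = m
  alt : ∀ (p q : Octo) (m : M),
    sm (p * q) m - sm p (sm q m) = -(sm (q * p) m - sm q (sm p m))

/-- The left associator `[p,q,m] = (pq)m − p(qm)`. -/
def oLassoc (sm : Octo → M → M) (p q : Octo) (m : M) : M :=
  sm (p * q) m - sm p (sm q m)

/-- The set `𝒜(M)` of associative elements: `[p,q,m] = 0` for all `p,q ∈ 𝕆`. -/
def assocSet (sm : Octo → M → M) : Set M :=
  {m | ∀ p q : Octo, oLassoc sm p q m = 0}

/-- The set `𝒜⁻(M)` of conjugate associative elements: `(pq)m = q(pm)` for all `p,q ∈ 𝕆`. -/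
def conjAssocSet (sm : Octo → M → M) : Set M :=
  {m | ∀ p q : Octo, sm (p * q) m = sm q (sm p m)}

/-- A homomorphism of left 𝕆-modules: an ℝ-linear map commuting with 𝕆-scalar
multiplication. -/
def IsOHom (sm : Octo → M → M) (sm' : Octo → N → N) (f : M → N) : Prop :=
  IsLinearMap ℝ f ∧ ∀ (p : Octo) (m : M), f (sm p m) = sm' p (f m)

/-- Two left 𝕆-modules are isomorphic if there is a bijective homomorphism between them. -/
def OIso (sm : Octo → M → M) (sm' : Octo → N → N) : Prop :=
  ∃ f : M → N, IsOHom sm sm' f ∧ Function.Bijective f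

/-- A submodule: a real subspace closed under 𝕆-scalar multiplication. -/
structure IsOSubmodule (sm : Octo → M → M) (S : Set M) : Prop where
  zero_mem : (0 : M) ∈ S
  add_mem : ∀ {x y : M}, x ∈ S → y ∈ S → x + y ∈ S
  smul_mem : ∀ (r : ℝ) {x : M}, x ∈ S → r • x ∈ S
  osmul_mem : ∀ (p : Octo) {x : M}, x ∈ S → sm p x ∈ S

/-- `⟨m⟩_𝕆`, the smallest submodule containing `m`, as a set. -/
def genSet (sm : Octo → M → M) (m : M) : Set M :=
  ⋂₀ {S : Set M | IsOSubmodule sm S ∧ m ∈ S}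

/-- An element `m` is cyclic if `⟨m⟩_𝕆 = 𝕆m`. -/
def IsOCyclic (sm : Octo → M → M) (m : M) : Prop :=
  genSet sm m = {x | ∃ p : Octo, x = sm p m}

/-- 𝕆-linear independence of a subset `S ⊆ M`: any finite 𝕆-linear combination of
distinct elements of `S` that vanishes has all coefficients zero. -/
def OLinIndep (sm : Octo → M → M) (S : Set M) : Prop :=
  ∀ (n : ℕ) (s : Fin n → M) (r : Fin n → Octo), Function.Injective s → (∀ i, s i ∈ S) →
    (∑ i, sm (r i) (s i)) = 0 → ∀ i, r i = 0

end OMod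

/-- The canonical left 𝕆-module structure on 𝕆 itself. -/
def oSmul : Octo → Octo → Octo := fun p x => p * x

/-- The left 𝕆-module structure `𝕆̄` on 𝕆: `p ·̂ x = p̄x`. -/
def oBarSmul : Octo → Octo → Octo := fun p x => Octo.conj p * x

/-!
On a left `𝕆`-module the seven imaginary units of `𝕆` act as anticommuting complex structures.
The four words `E_i E_j E_ij`, `E_i E_ℓ E_iℓ`, `E_j E_ℓ E_jℓ` and `E_ij E_ℓ E_(ij)ℓ` in these
operators are commuting involutions, so every nonzero submodule contains a common eigenvector `a`
of all four; applying further units to `a` makes its eigenvalues all `-1` or all `1`. Now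
`E_x E_y E_xy a = -a` says that the associator `[x, y, a]` vanishes, and the four vanishing
associators force `a` to be associative. Precomposing the action with conjugation flips the sign of
each word, so in the other case `a` is conjugate associative.

If `m ≠ 0` is cyclic, this gives such an `a ≠ 0` in `𝕆m`. Since `𝕆` acts without zero divisors,
`𝕆a` and `𝕆m` both have dimension 8, so `𝕆a = 𝕆m` and `m = pa` for some `p`.
-/

section CliffordFamily

variable {ι A : Type*} [Ring A]

/-- A family of generators of a negative definite Clifford algebra: its members square to `-1`
and anticommute pairwise. -/
structure IsCliffordFamily (E : ι → A) : Prop where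
  mul_self : ∀ x, E x * E x = -1
  anticomm : Pairwise fun x y ↦ E x * E y = -(E y * E x)

/-- The monomial `E x₁ ⋯ E xₙ` indexed by a word `[x₁, …, xₙ]` in the generators. -/
def cliffordWord (E : ι → A) (l : List ι) : A := (l.map E).prod

lemma cliffordWord_cons (E : ι → A) (x : ι) (l : List ι) :
    cliffordWord E (x :: l) = E x * cliffordWord E l := by
  simp [cliffordWord]

lemma cliffordWord_singleton (E : ι → A) (x : ι) : cliffordWord E [x] = E x := by
  simp [cliffordWord]

lemma cliffordWord_neg (E : ι → A) (l : List ι) :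
    cliffordWord (fun x ↦ -E x) l = (-1) ^ l.length * cliffordWord E l := by
  induction l with
  | nil => simp [cliffordWord]
  | cons x l ih =>
    rw [cliffordWord_cons, ih, cliffordWord_cons, List.length_cons, pow_succ, mul_assoc,
      neg_one_mul, neg_mul, mul_neg, ← mul_assoc, ← mul_assoc,
      ((Commute.neg_one_left (E x)).pow_left l.length).eq]

/-- The sign by which `cliffordWord E l * cliffordWord E l'` and
`cliffordWord E l' * cliffordWord E l` differ: one factor `-1` for each pair of distinct letters. -/
def swapSign [DecidableEq ι] (l l' : List ι) : ℤ :=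
  (l.map fun x ↦ (l'.map fun y ↦ if x = y then 1 else -1).prod).prod

namespace IsCliffordFamily

variable {E : ι → A}

lemma mul_cliffordWord [DecidableEq ι] (hE : IsCliffordFamily E) (x : ι) (l : List ι) :
    E x * cliffordWord E l = swapSign [x] l • (cliffordWord E l * E x) := by
  induction l with
  | nil => simp [cliffordWord, swapSign]
  | cons y l ih =>
    have h_swap : E x * E y = (if x = y then 1 else -1 : ℤ) • (E y * E x) := by
      split_ifs with hxy
      · simp [hxy]
      · simp [hE.anticomm hxy]
    have h_sign : swapSign [x] (y :: l) = (if x = y then 1 else -1) * swapSign [x] l := by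
      simp [swapSign]
    rw [cliffordWord_cons, h_sign, ← mul_assoc, h_swap, smul_mul_assoc, mul_assoc, ih,
      mul_smul_comm, smul_smul, mul_assoc]

lemma cliffordWord_mul_cliffordWord [DecidableEq ι] (hE : IsCliffordFamily E) (l l' : List ι) :
    cliffordWord E l * cliffordWord E l' =
      swapSign l l' • (cliffordWord E l' * cliffordWord E l) := by
  induction l with
  | nil => simp [cliffordWord, swapSign]
  | cons x l ih =>
    have h_sign : swapSign (x :: l) l' = swapSign l l' * swapSign [x] l' := by
      simp [swapSign, mul_comm]
    rw [cliffordWord_cons, h_sign, mul_assoc, ih, mul_smul_comm, ← mul_assoc, hE.mul_cliffordWord,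
      smul_mul_assoc, smul_smul, mul_assoc]

lemma commute_cliffordWord [DecidableEq ι] (hE : IsCliffordFamily E) {l l' : List ι}
    (h_sign : swapSign l l' = 1) : Commute (cliffordWord E l) (cliffordWord E l') := by
  rw [Commute, SemiconjBy, hE.cliffordWord_mul_cliffordWord, h_sign, one_smul]

lemma mul_cliffordWord_of_notMem (hE : IsCliffordFamily E) {x : ι} {l : List ι} (hx : x ∉ l) :
    E x * cliffordWord E l = (-1) ^ l.length * (cliffordWord E l * E x) := by
  classical
  have h_const : l.map (fun y ↦ if x = y then 1 else -1) = List.replicate l.length (-1 : ℤ) :=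
    List.map_eq_replicate_iff.2 fun y hy ↦ if_neg (ne_of_mem_of_not_mem hy hx).symm
  simp [hE.mul_cliffordWord, swapSign, h_const]

lemma cliffordWord_mul_self (hE : IsCliffordFamily E) {l : List ι} (hl : l.Nodup) :
    cliffordWord E l * cliffordWord E l = (-1) ^ (l.length + 1).choose 2 := by
  induction l with
  | nil => simp [cliffordWord]
  | cons x l ih =>
    obtain ⟨hx, hl⟩ := List.nodup_cons.1 hl
    calc
      cliffordWord E (x :: l) * cliffordWord E (x :: l)
          = E x * cliffordWord E l * (E x * cliffordWord E l) := by rw [cliffordWord_cons]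
      _ = (-1) ^ l.length * (cliffordWord E l * (E x * E x) * cliffordWord E l) := by
        nth_rewrite 1 [hE.mul_cliffordWord_of_notMem hx]
        simp only [mul_assoc]
      _ = (-1) ^ (l.length + 1) * (cliffordWord E l * cliffordWord E l) := by
        simp [hE.mul_self, pow_succ]
      _ = (-1) ^ ((x :: l).length + 1).choose 2 := by
        rw [ih hl, ← pow_add, List.length_cons, Nat.choose_succ_succ (l.length + 1),
          Nat.choose_one_right]

end IsCliffordFamily

end CliffordFamily

section Endomorphisms

variable {R M : Type*} [CommRing R] [AddCommGroup M] [Module R M]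

lemma cliffordWord_mem_invtSubmodule {ι : Type*} {E : ι → Module.End R M} {S : Submodule R M}
    (hS : ∀ x, S ∈ (E x).invtSubmodule) (l : List ι) :
    S ∈ (cliffordWord E l).invtSubmodule := by
  induction l with
  | nil => simp [cliffordWord, Module.End.invtSubmodule.one]
  | cons x l ih =>
    rw [cliffordWord_cons]
    exact Module.End.invtSubmodule.comp _ (hS x) ih

lemma IsCliffordFamily.apply_injective {ι : Type*} {E : ι → Module.End R M}
    (hE : IsCliffordFamily E) (x : ι) : Function.Injective (E x) := by
  refine (injective_iff_map_eq_zero _).2 fun m hm ↦ ?_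
  simpa [hm] using (LinearMap.congr_fun (hE.mul_self x) m).symm

variable {T F : Module.End R M} {S : Submodule R M}

lemma inf_eigenspace_mem_invtSubmodule {μ : R} (hFT : Commute F T) (hFS : S ∈ F.invtSubmodule) :
    S ⊓ T.eigenspace μ ∈ F.invtSubmodule :=
  Sublattice.inf_mem hFS (Module.End.mapsTo_genEigenspace_of_comm hFT.symm μ 1)

lemma inf_eigenspace_neg_one_ne_bot (hT : T * T = 1) (hTF : T * F = -(F * T))
    (hF : Function.Injective F) (hTS : S ∈ T.invtSubmodule) (hFS : S ∈ F.invtSubmodule)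
    (hS : S ≠ ⊥) : S ⊓ T.eigenspace (-1) ≠ ⊥ := by
  obtain ⟨v, hvS, hv⟩ := S.exists_mem_ne_zero_of_ne_bot hS
  suffices ∃ w ∈ S, w ≠ 0 ∧ T w = -w by
    obtain ⟨w, hwS, hw, hTw⟩ := this
    exact (Submodule.ne_bot_iff _).2 ⟨w, ⟨hwS, by simp [hTw]⟩, hw⟩
  by_cases hTv : T v = v
  · exact ⟨F v, hFS hvS, (map_ne_zero_iff F hF).2 hv, by
      simpa [hTv] using LinearMap.congr_fun hTF v⟩
  · have hTTv : T (T v) = v := LinearMap.congr_fun hT v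
    exact ⟨v - T v, S.sub_mem hvS (hTS hvS), sub_ne_zero.2 (Ne.symm hTv), by simp [hTTv]⟩

end Endomorphisms

section FanoLines

variable {R M : Type*} [CommRing R] [AddCommGroup M] [Module R M]

/-- The lines of the Fano plane spanned by the pairs `(i, j)`, `(i, ℓ)`, `(j, ℓ)` and `(ij, ℓ)` of
imaginary units of the octonions, numbered as in `Octo.e`. -/
def fanoLines : List (List (Fin 7)) := [[0, 1, 2], [0, 3, 4], [1, 3, 5], [2, 3, 6]]

lemma length_of_mem_fanoLines {l : List (Fin 7)} (hl : l ∈ fanoLines) : l.length = 3 := by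
  have h_all : ∀ l ∈ fanoLines, l.length = 3 := by decide
  exact h_all l hl

namespace IsCliffordFamily

variable {E : Fin 7 → Module.End R M} {S : Submodule R M}

lemma cliffordWord_fanoLine_mul_self (hE : IsCliffordFamily E) {l : List (Fin 7)}
    (hl : l ∈ fanoLines) : cliffordWord E l * cliffordWord E l = 1 := by
  have h_nodup : ∀ l ∈ fanoLines, l.Nodup := by decide
  rw [hE.cliffordWord_mul_self (h_nodup l hl), length_of_mem_fanoLines hl]
  exact Even.neg_one_pow (by decide)

lemma inf_eigenspace_cliffordWord_ne_bot (hE : IsCliffordFamily E) {l : List (Fin 7)}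
    (hl : l ∈ fanoLines) {x : Fin 7} (hxl : x ∉ l) (hlS : S ∈ (cliffordWord E l).invtSubmodule)
    (hxS : S ∈ (cliffordWord E [x]).invtSubmodule) (hS : S ≠ ⊥) :
    S ⊓ (cliffordWord E l).eigenspace (-1) ≠ ⊥ := by
  have h_anticomm : cliffordWord E l * E x = -(E x * cliffordWord E l) := by
    simp [hE.mul_cliffordWord_of_notMem hxl, length_of_mem_fanoLines hl, pow_succ]
  rw [cliffordWord_singleton] at hxS
  exact inf_eigenspace_neg_one_ne_bot (hE.cliffordWord_fanoLine_mul_self hl) h_anticomm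
    (hE.apply_injective x) hlS hxS hS

lemma exists_forall_take_fanoLines (hE : IsCliffordFamily E) (hS : ∀ x, S ∈ (E x).invtSubmodule)
    (hS₀ : S ≠ ⊥) : ∃ a ∈ S, a ≠ 0 ∧ ∀ l ∈ fanoLines.take 3, cliffordWord E l a = -a := by
  have h_word (l) : S ∈ (cliffordWord E l).invtSubmodule := cliffordWord_mem_invtSubmodule hS l
  have h_inf {S' : Submodule R M} {l l' : List (Fin 7)} (h_sign : swapSign l' l = 1)
      (hS' : S' ∈ (cliffordWord E l').invtSubmodule) :
      S' ⊓ (cliffordWord E l).eigenspace (-1) ∈ (cliffordWord E l').invtSubmodule :=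
    inf_eigenspace_mem_invtSubmodule (hE.commute_cliffordWord h_sign) hS'
  have h₁ : S ⊓ (cliffordWord E [0, 1, 2]).eigenspace (-1) ≠ ⊥ :=
    hE.inf_eigenspace_cliffordWord_ne_bot (x := 3) (by decide) (by decide) (h_word _) (h_word _) hS₀
  have h₂ := hE.inf_eigenspace_cliffordWord_ne_bot (l := [0, 3, 4]) (x := 1) (by decide)
    (by decide) (h_inf (by decide) (h_word _)) (h_inf (by decide) (h_word _)) h₁
  have h₃ := hE.inf_eigenspace_cliffordWord_ne_bot (l := [1, 3, 5]) (x := 0) (by decide)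
    (by decide) (h_inf (by decide) (h_inf (by decide) (h_word _)))
    (h_inf (by decide) (h_inf (by decide) (h_word _))) h₂
  obtain ⟨a, ⟨⟨⟨haS, ha₁⟩, ha₂⟩, ha₃⟩, ha⟩ := Submodule.exists_mem_ne_zero_of_ne_bot h₃
  refine ⟨a, haS, ha, ?_⟩
  simp_all [fanoLines]

lemma exists_forall_fanoLines (hE : IsCliffordFamily E) (hS : ∀ x, S ∈ (E x).invtSubmodule)
    (hS₀ : S ≠ ⊥) : ∃ a ∈ S, a ≠ 0 ∧ ((∀ l ∈ fanoLines, cliffordWord E l a = -a) ∨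
      ∀ l ∈ fanoLines, cliffordWord E l a = a) := by
  obtain ⟨a, haS, ha, h_take⟩ := hE.exists_forall_take_fanoLines hS hS₀
  have h_cases : ∀ l ∈ fanoLines, l ∈ fanoLines.take 3 ∨ l = [2, 3, 6] := by decide
  by_cases h_last : cliffordWord E [2, 3, 6] a = a
  -- `6` lies on the last line only, so `E 6` flips the first three eigenvalues and fixes the last.
  · refine ⟨E 6 a, hS 6 haS, (map_ne_zero_iff _ (hE.apply_injective 6)).2 ha, .inr fun l hl ↦ ?_⟩
    have h_swap := LinearMap.congr_fun (hE.mul_cliffordWord 6 l) a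
    have h_sign : ∀ l ∈ fanoLines.take 3, swapSign [6] l = -1 := by decide
    have h_sign_last : swapSign [(6 : Fin 7)] [2, 3, 6] = 1 := by decide
    obtain hl | rfl := h_cases l hl
    · simpa [h_sign l hl, h_take l hl] using h_swap.symm
    · simpa [h_sign_last, h_last] using h_swap.symm
  · refine ⟨a - cliffordWord E [2, 3, 6] a,
      S.sub_mem haS (cliffordWord_mem_invtSubmodule hS _ haS),
      sub_ne_zero.2 (Ne.symm h_last), .inl fun l hl ↦ ?_⟩
    obtain hl' | rfl := h_cases l hl
    · have h_sign : ∀ l ∈ fanoLines, swapSign l [2, 3, 6] = 1 := by decide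
      have h_comm := LinearMap.congr_fun (hE.commute_cliffordWord (h_sign l hl)).eq a
      simp only [Module.End.mul_apply, h_take l hl', map_neg] at h_comm
      rw [map_sub, h_comm, h_take l hl']
      abel
    · have h_sq : cliffordWord E [2, 3, 6] (cliffordWord E [2, 3, 6] a) = a :=
        LinearMap.congr_fun (hE.cliffordWord_fanoLine_mul_self hl) a
      rw [map_sub, h_sq, neg_sub]

end IsCliffordFamily

end FanoLines

section Octonions

namespace Octo

variable {x y : Octo}

@[ext]
lemma ext (h₁ : p1 x = p1 y) (h₂ : p2 x = p2 y) : x = y := Prod.ext h₁ h₂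

@[simp] lemma p1_zero : p1 0 = 0 := rfl
@[simp] lemma p2_zero : p2 0 = 0 := rfl
@[simp] lemma p1_one : p1 1 = 1 := rfl
@[simp] lemma p2_one : p2 1 = 0 := rfl
@[simp] lemma p1_add (x y : Octo) : p1 (x + y) = p1 x + p1 y := rfl
@[simp] lemma p2_add (x y : Octo) : p2 (x + y) = p2 x + p2 y := rfl
@[simp] lemma p1_neg (x : Octo) : p1 (-x) = -p1 x := rfl
@[simp] lemma p2_neg (x : Octo) : p2 (-x) = -p2 x := rfl
@[simp] lemma p1_sub (x y : Octo) : p1 (x - y) = p1 x - p1 y := rfl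
@[simp] lemma p2_sub (x y : Octo) : p2 (x - y) = p2 x - p2 y := rfl
@[simp] lemma p1_smul (r : ℝ) (x : Octo) : p1 (r • x) = r • p1 x := rfl
@[simp] lemma p2_smul (r : ℝ) (x : Octo) : p2 (r • x) = r • p2 x := rfl
@[simp] lemma p1_mul (x y : Octo) : p1 (x * y) = p1 x * p1 y - star (p2 y) * p2 x := rfl
@[simp] lemma p2_mul (x y : Octo) : p2 (x * y) = p2 y * p1 x + p2 x * star (p1 y) := rfl
@[simp] lemma p1_conj (x : Octo) : p1 (conj x) = star (p1 x) := rfl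
@[simp] lemma p2_conj (x : Octo) : p2 (conj x) = -p2 x := rfl

instance : FiniteDimensional ℝ Octo := inferInstanceAs (FiniteDimensional ℝ (ℍ[ℝ] × ℍ[ℝ]))

instance : NonAssocRing Octo where
  left_distrib x y z := by ext1 <;> simp [mul_add, add_mul] <;> abel
  right_distrib x y z := by ext1 <;> simp [mul_add, add_mul] <;> abel
  zero_mul x := by ext1 <;> simp
  mul_zero x := by ext1 <;> simp
  one_mul x := by ext1 <;> simp
  mul_one x := by ext1 <;> simp

instance : IsScalarTower ℝ Octo Octo := ⟨fun r x y ↦ by ext1 <;> simp [smul_sub]⟩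

instance : SMulCommClass ℝ Octo Octo := ⟨fun r x y ↦ by ext1 <;> simp [smul_sub]⟩

/-- The squared norm `|x|² = x * conj x` of an octonion. -/
def normSq (x : Octo) : ℝ := Quaternion.normSq (p1 x) + Quaternion.normSq (p2 x)

lemma normSq_eq_zero : normSq x = 0 ↔ x = 0 := by
  rw [normSq, add_eq_zero_iff_of_nonneg Quaternion.normSq_nonneg Quaternion.normSq_nonneg,
    Quaternion.normSq_eq_zero, Quaternion.normSq_eq_zero, Octo.ext_iff, p1_zero, p2_zero]

lemma mul_self_eq (x : Octo) : x * x = (2 * (p1 x).re) • x - normSq x • 1 := by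
  ext <;> simp [normSq, Quaternion.normSq_def'] <;> ring

lemma mul_add_mul_eq (hx : (p1 x).re = 0) (hy : (p1 y).re = 0) :
    x * y + y * x = (normSq x + normSq y - normSq (x + y)) • 1 := by
  calc
    x * y + y * x = (x + y) * (x + y) - x * x - y * y := by
      rw [mul_add, add_mul, add_mul]
      abel
    _ = (normSq x + normSq y - normSq (x + y)) • 1 := by
      simp only [mul_self_eq, p1_add, Quaternion.re_add, hx, hy]
      module

lemma conj_one : conj 1 = 1 := by ext1 <;> simp

lemma conj_add (x y : Octo) : conj (x + y) = conj x + conj y := by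
  ext1 <;> simp [add_comm]

lemma conj_smul (r : ℝ) (x : Octo) : conj (r • x) = r • conj x := by ext1 <;> simp

lemma conj_conj (x : Octo) : conj (conj x) = x := by ext1 <;> simp

lemma conj_mul (x y : Octo) : conj (x * y) = conj y * conj x := by ext1 <;> simp

lemma mul_mul_self_left (x y : Octo) : x * (x * y) = x * x * y := by
  ext <;> simp <;> ring

/-- The quaternions embedded in the octonions as the first summand. -/
def ofQuat : ℍ[ℝ] →ₗ[ℝ] Octo := LinearMap.inl ℝ ℍ[ℝ] ℍ[ℝ]

@[simp] lemma p1_ofQuat (p : ℍ[ℝ]) : p1 (ofQuat p) = p := rfl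
@[simp] lemma p2_ofQuat (p : ℍ[ℝ]) : p2 (ofQuat p) = 0 := rfl

/-- The octonion unit `ℓ = (0, 1)`, which extends `ℍ` to `𝕆 = ℍ ⊕ ℍℓ`. -/
def ell : Octo := mk 0 1

@[simp] lemma p1_ell : p1 ell = 0 := rfl
@[simp] lemma p2_ell : p2 ell = 1 := rfl

lemma ofQuat_add_ofQuat_mul_ell (x : Octo) : ofQuat (p1 x) + ofQuat (p2 x) * ell = x := by
  ext1 <;> simp

lemma ofQuat_mul (p q : ℍ[ℝ]) : ofQuat (p * q) = ofQuat p * ofQuat q := by ext1 <;> simp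

lemma ell_mul_ofQuat (p : ℍ[ℝ]) : ell * ofQuat p = ofQuat (star p) * ell := by ext1 <;> simp

lemma ofQuat_mul_ofQuat_mul_ell (p q : ℍ[ℝ]) :
    ofQuat p * (ofQuat q * ell) = ofQuat (q * p) * ell := by
  ext1 <;> simp

lemma ofQuat_mul_ell_mul_ofQuat (p q : ℍ[ℝ]) :
    ofQuat p * ell * ofQuat q = ofQuat (p * star q) * ell := by
  ext1 <;> simp

/-- The quaternion unit `i`. -/
@[simps]
def quatI : ℍ[ℝ] := ⟨0, 1, 0, 0⟩

/-- The quaternion unit `j`. -/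
@[simps]
def quatJ : ℍ[ℝ] := ⟨0, 0, 1, 0⟩

/-- The imaginary units `i, j, ij, ℓ, iℓ, jℓ, (ij)ℓ`. -/
def e : Fin 7 → Octo :=
  ![ofQuat quatI, ofQuat quatJ, ofQuat (quatI * quatJ), ell,
    ofQuat quatI * ell, ofQuat quatJ * ell, ofQuat (quatI * quatJ) * ell]

lemma ofQuat_eq_sum (p : ℍ[ℝ]) :
    ofQuat p = p.re • 1 + p.imI • e 0 + p.imJ • e 1 + p.imK • e 2 := by
  ext <;> simp [e]

lemma conj_e (n : Fin 7) : conj (e n) = -e n := by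
  fin_cases n <;> ext <;> simp [e]

lemma re_e (n : Fin 7) : (p1 (e n)).re = 0 := by
  fin_cases n <;> simp [e]

lemma normSq_e (n : Fin 7) : normSq (e n) = 1 := by
  fin_cases n <;> simp [e, normSq, Quaternion.normSq_def']

lemma normSq_e_add_e {m n : Fin 7} (h : m ≠ n) : normSq (e m + e n) = 2 := by
  fin_cases m <;> fin_cases n <;> first | exact absurd rfl h |
    (simp [e, normSq, Quaternion.normSq_def']; norm_num)

lemma e_mul_self (n : Fin 7) : e n * e n = -1 := by
  simp [mul_self_eq, re_e, normSq_e]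

lemma e_mul_e_add_e_mul_e {m n : Fin 7} (h : m ≠ n) : e m * e n + e n * e m = 0 := by
  rw [mul_add_mul_eq (re_e m) (re_e n), normSq_e, normSq_e, normSq_e_add_e h, one_add_one_eq_two,
    sub_self, zero_smul]

end Octo

end Octonions

section Modules

open Octo

lemma conjAssocSet_eq {M : Type*} [AddCommGroup M] (sm : Octo → M → M) :
    conjAssocSet sm = assocSet fun p ↦ sm (conj p) := by
  ext m
  refine ⟨fun hm p q ↦ sub_eq_zero.2 ?_, fun hm p q ↦ ?_⟩
  · beta_reduce
    rw [Octo.conj_mul]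
    exact hm (conj q) (conj p)
  · have h_conj := sub_eq_zero.1 (hm (conj q) (conj p))
    simpa only [Octo.conj_mul, conj_conj] using h_conj

variable {M : Type*} [AddCommGroup M] [Module ℝ M] {sm : Octo → M → M}

namespace IsOMod

/-- The action of `𝕆` on an `𝕆`-module, as a real linear map into the endomorphism ring. -/
def toEnd (h : IsOMod sm) : Octo →ₗ[ℝ] Module.End ℝ M :=
  LinearMap.mk₂ ℝ sm h.add_smul h.real_smul h.smul_add h.smul_real

@[simp] lemma toEnd_apply (h : IsOMod sm) (p : Octo) (m : M) : h.toEnd p m = sm p m := rfl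

lemma osmul_zero (h : IsOMod sm) (p : Octo) : sm p 0 = 0 := map_zero (h.toEnd p)

lemma toEnd_mul_add_mul (h : IsOMod sm) (p q : Octo) :
    h.toEnd p * h.toEnd q + h.toEnd q * h.toEnd p = h.toEnd (p * q + q * p) := by
  ext m
  have h_alt : sm (p * q) m - sm p (sm q m) + (sm (q * p) m - sm q (sm p m)) = 0 :=
    add_eq_zero_iff_eq_neg.2 (h.alt p q m)
  simpa using (sub_eq_zero.1 ((add_sub_add_comm _ _ _ _).trans h_alt)).symm

lemma toEnd_mul_self (h : IsOMod sm) (p : Octo) : h.toEnd p * h.toEnd p = h.toEnd (p * p) := by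
  have h_polar := h.toEnd_mul_add_mul p p
  rw [map_add, ← two_smul ℝ, ← two_smul ℝ (h.toEnd _)] at h_polar
  exact smul_right_injective _ two_ne_zero h_polar

lemma toEnd_one (h : IsOMod sm) : h.toEnd 1 = 1 := LinearMap.ext h.one_smul

lemma isCliffordFamily (h : IsOMod sm) : IsCliffordFamily fun n ↦ h.toEnd (e n) where
  mul_self n := by rw [h.toEnd_mul_self, e_mul_self, map_neg, h.toEnd_one]
  anticomm m n hmn := show _ = _ by
    rw [eq_neg_iff_add_eq_zero, h.toEnd_mul_add_mul, e_mul_e_add_e_mul_e hmn, map_zero]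

lemma eq_zero_of_smul_eq_zero (h : IsOMod sm) {p : Octo} {m : M} (hm : m ≠ 0)
    (hpm : sm p m = 0) : p = 0 := by
  have h_sq : sm (p * p) m = 0 := by
    rw [← h.toEnd_apply, ← h.toEnd_mul_self, Module.End.mul_apply, h.toEnd_apply p m, hpm, map_zero]
  have h_norm : normSq p • m = 0 := by
    rw [← h.toEnd_apply, mul_self_eq, map_sub, map_smul, map_smul, h.toEnd_one] at h_sq
    simpa [hpm] using h_sq
  exact normSq_eq_zero.1 ((smul_eq_zero.1 h_norm).resolve_right hm)

/-- The left associator `(p, q) ↦ [p, q, a]` of a fixed element `a`, as a bilinear map. -/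
def lassoc (h : IsOMod sm) (a : M) : Octo →ₗ[ℝ] Octo →ₗ[ℝ] M :=
  (LinearMap.mul ℝ Octo).compr₂ (h.toEnd.flip a) - h.toEnd.compl₂ (h.toEnd.flip a)

variable {a : M} {p q : Octo}

lemma lassoc_apply (h : IsOMod sm) : h.lassoc a p q = oLassoc sm p q a := rfl

lemma lassoc_eq_zero_iff (h : IsOMod sm) : h.lassoc a p q = 0 ↔ sm (p * q) a = sm p (sm q a) :=
  sub_eq_zero

lemma lassoc_swap (h : IsOMod sm) : h.lassoc a p q = -h.lassoc a q p := h.alt p q a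

lemma lassoc_self (h : IsOMod sm) : h.lassoc a p p = 0 :=
  h.lassoc_eq_zero_iff.2 (LinearMap.congr_fun (h.toEnd_mul_self p) a).symm

lemma lassoc_one_left (h : IsOMod sm) : h.lassoc a 1 q = 0 := by
  rw [h.lassoc_eq_zero_iff, one_mul, h.one_smul]

lemma lassoc_comm_eq_zero (h : IsOMod sm) (hpq : h.lassoc a p q = 0) : h.lassoc a q p = 0 := by
  rw [h.lassoc_swap, hpq, neg_zero]

lemma lassoc_one_right (h : IsOMod sm) : h.lassoc a p 1 = 0 :=
  h.lassoc_comm_eq_zero h.lassoc_one_left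

-- By left alternativity `[p, pq, a] = [p², q, a]`, and `p²` is a real combination of `p` and `1`.
lemma lassoc_mul_eq_zero (h : IsOMod sm) (hpq : h.lassoc a p q = 0) :
    h.lassoc a p (p * q) = 0 := by
  have h_sq : h.lassoc a (p * p) q = 0 := by
    rw [mul_self_eq, map_sub, map_smul, map_smul]
    simp [hpq, h.lassoc_one_left]
  rw [h.lassoc_eq_zero_iff] at h_sq hpq ⊢
  calc
    sm (p * (p * q)) a = sm (p * p) (sm q a) := by rw [mul_mul_self_left, h_sq]
    _ = sm p (sm p (sm q a)) := (LinearMap.congr_fun (h.toEnd_mul_self p) _).symm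
    _ = sm p (sm (p * q) a) := by rw [hpq]

lemma lassoc_ofQuat_ofQuat (h : IsOMod sm) (hij : h.lassoc a (e 0) (e 1) = 0) (p q : ℍ[ℝ]) :
    h.lassoc a (ofQuat p) (ofQuat q) = 0 := by
  have h_ij_mul : e 2 = e 0 * e 1 := ofQuat_mul _ _
  have h_ji_mul : e 2 = -(e 1 * e 0) := by
    rw [h_ij_mul, ← add_eq_zero_iff_eq_neg, e_mul_e_add_e_mul_e (by decide)]
  have hji := h.lassoc_comm_eq_zero hij
  have hik : h.lassoc a (e 0) (e 2) = 0 := by rw [h_ij_mul, h.lassoc_mul_eq_zero hij]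
  have hjk : h.lassoc a (e 1) (e 2) = 0 := by
    rw [h_ji_mul, map_neg, h.lassoc_mul_eq_zero hji, neg_zero]
  rw [ofQuat_eq_sum p, ofQuat_eq_sum q]
  simp [hij, hji, hik, hjk, h.lassoc_comm_eq_zero hik, h.lassoc_comm_eq_zero hjk, h.lassoc_self,
    h.lassoc_one_left, h.lassoc_one_right]

lemma smul_smul_ell (h : IsOMod sm) (p : ℍ[ℝ]) (m : M) :
    sm (ofQuat p) (sm ell m) = sm ell (sm (ofQuat (star p)) m) := by
  suffices h.toEnd (ofQuat p) * h.toEnd ell = h.toEnd ell * h.toEnd (ofQuat (star p)) from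
    LinearMap.congr_fun this m
  have h_star : ofQuat (star p) = (2 * p.re) • 1 - ofQuat p := by
    ext <;> simp
    ring
  have h_trace : ofQuat p * ell + ell * ofQuat p = (2 * p.re) • ell := by
    rw [ell_mul_ofQuat, h_star, sub_mul, smul_mul_assoc, one_mul, add_sub_cancel]
  rw [h_star, map_sub, map_smul, h.toEnd_one, mul_sub, mul_smul_comm, mul_one, eq_sub_iff_add_eq,
    h.toEnd_mul_add_mul, h_trace, map_smul]

lemma lassoc_ofQuat_ofQuat_mul_ell (h : IsOMod sm)
    (h_quat : ∀ p q, h.lassoc a (ofQuat p) (ofQuat q) = 0)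
    (h_ell : ∀ p, h.lassoc a (ofQuat p) ell = 0) (p q : ℍ[ℝ]) :
    h.lassoc a (ofQuat p) (ofQuat q * ell) = 0 := by
  simp only [h.lassoc_eq_zero_iff] at h_quat h_ell ⊢
  have h_ell_left (p : ℍ[ℝ]) : sm ell (sm (ofQuat (star p)) a) = sm (ofQuat p * ell) a := by
    rw [h_ell, h.smul_smul_ell]
  calc
    sm (ofQuat p * (ofQuat q * ell)) a = sm ell (sm (ofQuat (star p * star q)) a) := by
      rw [ofQuat_mul_ofQuat_mul_ell, ← star_mul, h_ell_left]
    _ = sm (ofQuat p) (sm ell (sm (ofQuat (star q)) a)) := by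
      rw [ofQuat_mul, h_quat, h.smul_smul_ell]
    _ = sm (ofQuat p) (sm (ofQuat q * ell) a) := by rw [h_ell_left]

lemma lassoc_ofQuat_mul_ell_ofQuat_mul_ell (h : IsOMod sm)
    (h_mixed : ∀ p q, h.lassoc a (ofQuat p) (ofQuat q * ell) = 0) (p q : ℍ[ℝ]) :
    h.lassoc a (ofQuat p * ell) (ofQuat q * ell) = 0 := by
  obtain rfl | hp := eq_or_ne p 0
  · simp
  have hq : ofQuat q * ell = ofQuat p * ell * ofQuat (star (p⁻¹ * q)) := by
    rw [ofQuat_mul_ell_mul_ofQuat, star_star, mul_inv_cancel_left₀ hp]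
  rw [hq, h.lassoc_mul_eq_zero (h.lassoc_comm_eq_zero (h_mixed _ _))]

lemma mem_assocSet_of_lassoc_e_eq_zero (h : IsOMod sm)
    (hij : h.lassoc a (e 0) (e 1) = 0) (hi : h.lassoc a (e 0) (e 3) = 0)
    (hj : h.lassoc a (e 1) (e 3) = 0) (hk : h.lassoc a (e 2) (e 3) = 0) : a ∈ assocSet sm := by
  have h_quat := h.lassoc_ofQuat_ofQuat hij
  have h_ell (p : ℍ[ℝ]) : h.lassoc a (ofQuat p) ell = 0 := by
    change h.lassoc a (ofQuat p) (e 3) = 0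
    rw [ofQuat_eq_sum]
    simp [hi, hj, hk, h.lassoc_one_left]
  have h_mixed := h.lassoc_ofQuat_ofQuat_mul_ell h_quat h_ell
  intro x y
  rw [← h.lassoc_apply, ← ofQuat_add_ofQuat_mul_ell x, ← ofQuat_add_ofQuat_mul_ell y]
  simp [h_quat, h_mixed, h.lassoc_ofQuat_mul_ell_ofQuat_mul_ell h_mixed,
    h.lassoc_comm_eq_zero (h_mixed _ _)]

lemma lassoc_e_eq_zero (h : IsOMod sm) {x y z : Fin 7} (hxy : x ≠ y) (hz : e z = e x * e y)
    (h_word : cliffordWord (fun n ↦ h.toEnd (e n)) [x, y, z] a = -a) :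
    h.lassoc a (e x) (e y) = 0 := by
  set E := fun n ↦ h.toEnd (e n)
  have hE : IsCliffordFamily E := h.isCliffordFamily
  have h_inv : E y * E x * cliffordWord E [x, y, z] = E z := by
    calc
      E y * E x * cliffordWord E [x, y, z] = E y * (E x * E x) * E y * E z := by
        simp [cliffordWord, mul_assoc]
      _ = E z := by simp [hE.mul_self]
  have h_z : E z a = E x (E y a) := by
    have h_app := LinearMap.congr_fun h_inv a
    have h_anti := LinearMap.congr_fun (hE.anticomm hxy) a
    simp only [Module.End.mul_apply, h_word, map_neg] at h_app
    rw [← h_app]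
    exact h_anti.symm
  rwa [h.lassoc_eq_zero_iff, ← hz]

lemma mem_assocSet_of_fanoLines (h : IsOMod sm)
    (h_word : ∀ l ∈ fanoLines, cliffordWord (fun n ↦ h.toEnd (e n)) l a = -a) :
    a ∈ assocSet sm :=
  h.mem_assocSet_of_lassoc_e_eq_zero
    (h.lassoc_e_eq_zero (z := 2) (by decide) (ofQuat_mul _ _) (h_word _ (by decide)))
    (h.lassoc_e_eq_zero (z := 4) (by decide) rfl (h_word _ (by decide)))
    (h.lassoc_e_eq_zero (z := 5) (by decide) rfl (h_word _ (by decide)))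
    (h.lassoc_e_eq_zero (z := 6) (by decide) rfl (h_word _ (by decide)))

lemma smul_conj (h : IsOMod sm) : IsOMod fun p ↦ sm (conj p) where
  smul_add p := h.smul_add (conj p)
  add_smul p q m := by rw [conj_add, h.add_smul]
  real_smul r p m := by rw [conj_smul, h.real_smul]
  smul_real r p := h.smul_real r (conj p)
  one_smul m := by rw [conj_one, h.one_smul]
  alt p q m := by
    have h_alt := h.alt (conj q) (conj p) m
    simp only [Octo.conj_mul]
    rw [sub_eq_iff_eq_add] at h_alt ⊢
    rw [h_alt]
    abel

end IsOMod

lemma IsOMod.mem_conjAssocSet_of_fanoLines (h : IsOMod sm) {a : M}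
    (h_word : ∀ l ∈ fanoLines, cliffordWord (fun n ↦ h.toEnd (e n)) l a = a) :
    a ∈ conjAssocSet sm := by
  have h_neg (n : Fin 7) : h.smul_conj.toEnd (e n) = -h.toEnd (e n) := by
    rw [← map_neg, ← conj_e]
    rfl
  rw [conjAssocSet_eq]
  refine h.smul_conj.mem_assocSet_of_fanoLines fun l hl ↦ ?_
  have h_odd : Odd l.length := by simp [length_of_mem_fanoLines hl, Nat.odd_iff]
  simp [h_neg, cliffordWord_neg, h_odd.neg_one_pow, h_word l hl]

lemma IsOMod.exists_mem_assocSet_or_mem_conjAssocSet (h : IsOMod sm) {S : Submodule ℝ M}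
    (hS : ∀ p, S ∈ (h.toEnd p).invtSubmodule) (hS₀ : S ≠ ⊥) :
    ∃ a ∈ S, a ≠ 0 ∧ (a ∈ assocSet sm ∨ a ∈ conjAssocSet sm) := by
  obtain ⟨a, haS, ha, h_word⟩ := h.isCliffordFamily.exists_forall_fanoLines (fun n ↦ hS (e n)) hS₀
  exact ⟨a, haS, ha,
    h_word.imp h.mem_assocSet_of_fanoLines h.mem_conjAssocSet_of_fanoLines⟩

namespace IsOMod

/-- The orbit map `p ↦ p • m` of an element `m` of an `𝕆`-module; its range is `𝕆m`. -/
def orbit (h : IsOMod sm) (m : M) : Octo →ₗ[ℝ] M := h.toEnd.flip m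

variable {m a : M}

lemma mem_range_orbit (h : IsOMod sm) (p : Octo) (m : M) :
    sm p m ∈ LinearMap.range (h.orbit m) := ⟨p, rfl⟩

lemma self_mem_range_orbit (h : IsOMod sm) (m : M) : m ∈ LinearMap.range (h.orbit m) :=
  ⟨1, h.one_smul m⟩

lemma orbit_injective (h : IsOMod sm) (hm : m ≠ 0) : Function.Injective (h.orbit m) :=
  (injective_iff_map_eq_zero _).2 fun _ ↦ h.eq_zero_of_smul_eq_zero hm

lemma isOCyclic_iff (h : IsOMod sm) :
    IsOCyclic sm m ↔ ∀ p, LinearMap.range (h.orbit m) ∈ (h.toEnd p).invtSubmodule := by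
  have h_range : {x | ∃ p, x = sm p m} = LinearMap.range (h.orbit m) := by
    ext x
    exact exists_congr fun p ↦ eq_comm
  rw [IsOCyclic, h_range]
  refine ⟨fun h_gen p x hx ↦ ?_, fun h_inv ↦ Set.Subset.antisymm ?_ ?_⟩
  · rw [← SetLike.mem_coe, ← h_gen] at hx
    have h_smul : sm p x ∈ genSet sm m := fun S hS ↦ hS.1.osmul_mem p (hx S hS)
    rwa [h_gen] at h_smul
  · refine Set.sInter_subset_of_mem ⟨?_, h.self_mem_range_orbit m⟩
    exact ⟨zero_mem _, add_mem, fun r _ ↦ Submodule.smul_mem _ r, fun p _ hx ↦ h_inv p hx⟩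
  · rintro _ ⟨p, rfl⟩ S ⟨hS, hmS⟩
    exact hS.osmul_mem p hmS

lemma range_orbit_eq (h : IsOMod sm) (hm : IsOCyclic sm m) (ha : a ∈ LinearMap.range (h.orbit m))
    (ha₀ : a ≠ 0) : LinearMap.range (h.orbit a) = LinearMap.range (h.orbit m) := by
  have h_le : LinearMap.range (h.orbit a) ≤ LinearMap.range (h.orbit m) := by
    rintro _ ⟨p, rfl⟩
    exact h.isOCyclic_iff.1 hm p ha
  have hm₀ : m ≠ 0 := by
    rintro rfl
    obtain ⟨p, rfl⟩ := ha
    exact ha₀ (h.osmul_zero p)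
  refine Submodule.eq_of_le_of_finrank_eq h_le ?_
  rw [LinearMap.finrank_range_of_inj (h.orbit_injective ha₀),
    LinearMap.finrank_range_of_inj (h.orbit_injective hm₀)]

lemma isOCyclic_smul (h : IsOMod sm) (ha : IsOCyclic sm a) (p : Octo) : IsOCyclic sm (sm p a) := by
  obtain hp | hp := eq_or_ne (sm p a) 0
  · rw [hp, h.isOCyclic_iff]
    rintro q _ ⟨r, rfl⟩
    exact ⟨0, by simp [orbit, h.osmul_zero]⟩
  · rw [h.isOCyclic_iff, h.range_orbit_eq ha (h.mem_range_orbit p a) hp]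
    exact h.isOCyclic_iff.1 ha

lemma isOCyclic_of_mem_assocSet (h : IsOMod sm) (ha : a ∈ assocSet sm) : IsOCyclic sm a := by
  rw [h.isOCyclic_iff]
  rintro q _ ⟨p, rfl⟩
  exact ⟨q * p, sub_eq_zero.1 (ha q p)⟩

lemma isOCyclic_of_mem_conjAssocSet (h : IsOMod sm) (ha : a ∈ conjAssocSet sm) :
    IsOCyclic sm a := by
  rw [h.isOCyclic_iff]
  rintro q _ ⟨p, rfl⟩
  exact ⟨p * q, ha p q⟩

end IsOMod

end Modules

/-- `𝒞(M) = (⋃_{p ∈ 𝕆} p·𝒜(M)) ∪ (⋃_{p ∈ 𝕆} p·𝒜⁻(M))`. -/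
theorem stmt2 {M : Type*} [AddCommGroup M] [Module ℝ M]
    (sm : Octo → M → M) (h : IsOMod sm) :
    {m : M | IsOCyclic sm m} =
      (⋃ p : Octo, (sm p) '' assocSet sm) ∪ (⋃ p : Octo, (sm p) '' conjAssocSet sm) := by
  ext m
  simp only [Set.mem_ofPred_eq, Set.mem_union, Set.mem_iUnion]
  constructor
  · intro hm
    obtain rfl | hm₀ := eq_or_ne m 0
    · exact .inl ⟨0, 0, fun p q ↦ by simp [oLassoc, h.osmul_zero], h.osmul_zero 0⟩
    have h_self := h.self_mem_range_orbit m
    obtain ⟨a, ham, ha₀, ha⟩ := h.exists_mem_assocSet_or_mem_conjAssocSet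
      (h.isOCyclic_iff.1 hm) ((Submodule.ne_bot_iff _).2 ⟨m, h_self, hm₀⟩)
    obtain ⟨p, hp⟩ : m ∈ LinearMap.range (h.orbit a) := by rwa [h.range_orbit_eq hm ham ha₀]
    exact ha.imp (fun ha ↦ ⟨p, a, ha, hp⟩) fun ha ↦ ⟨p, a, ha, hp⟩
  · rintro (⟨p, a, ha, rfl⟩ | ⟨p, a, ha, rfl⟩)
    · exact h.isOCyclic_smul (h.isOCyclic_of_mem_assocSet ha) p
    · exact h.isOCyclic_smul (h.isOCyclic_of_mem_conjAssocSet ha) p
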